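/- For every fixed α > 1 there exists a constant C > 0 (depending only on α) such that the following holds. For all n, B, k ∈ ℕ with k ≥ 2, B ≥ 2 and k·B ≤ n, for truly random independent hash functions h_1,...,h_k : {1,...,n} → {1,...,B}, and for every i ∈ {1,...,n}, the Count-Min estimate f̃_i of the frequency f_i = 1/i^α satisfies E[f̃_i − f_i] ≤ C^k·(log B)^{k/α + 1}·(B^{−k} + B^{−α}). -/

import Mathlib

/-- Expectation of a real-valued random variable on a finite probability space
with the uniform distribution. -/
noncomputable def expUnif {Ω : Type*} [Fintype Ω] (X : Ω → ℝ) : ℝ :=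
  (∑ ω : Ω, X ω) / (Fintype.card Ω : ℝ)

/-- Generalized Zipfian frequency with exponent `α` of the item indexed by
`i : Fin n` (representing item `i+1`): `1/(i+1)^α`. -/
noncomputable def zipfGen (α : ℝ) {n : ℕ} (i : Fin n) : ℝ :=
  ((i : ℝ) + 1) ^ (-α)

/-- The Count-Min estimate of item `i` given the `k` hash functions `h`. -/
noncomputable def cmEst {n B k : ℕ} (f : Fin n → ℝ) (h : Fin k → Fin n → Fin B)
    (i : Fin n) : ℝ :=
  ⨅ ℓ : Fin k, ∑ j : Fin n, if h ℓ j = h ℓ i then f j else 0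

/-!
Truncating the frequencies at `t` makes Markov's inequality sharp enough: since `x ↦ min t x` is
subadditive, the error of one row is at least `t` with probability at most
`∑ j, min t (f j) / (t * B)`, which for Zipfian frequencies is `O(t ^ (-1 / α) / B)`. The rows are
independent, so the error of the sketch is at least `t` with probability at most
`C ^ k * B ^ (-k) * t ^ (-k / α)`. For `B ^ (-α) ≤ t` this is a weak-`L¹` bound: it is at most
`C ^ k * (B ^ (-k) + B ^ (-α)) / t`, whichever of `k` and `α` is larger. Integrating it over `t`
from `B ^ (-α)` up to the total frequency costs a single factor `log B`, and the contribution of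
errors below `B ^ (-α)` is at most `B ^ (-α)`.
-/

open Finset
open scoped BigOperators

section UniformProbability

variable {Ω : Type*} [Fintype Ω]

lemma expUnif_eq_expect (X : Ω → ℝ) : expUnif X = 𝔼 ω, X ω :=
  (Fintype.expect_eq_sum_div_card X).symm

/-- The probability that the random variable `X` on the uniform space `Ω` is at least `t`. -/
noncomputable def tailProb (X : Ω → ℝ) (t : ℝ) : ℝ :=
  𝔼 ω, if t ≤ X ω then 1 else 0

lemma tailProb_nonneg (X : Ω → ℝ) (t : ℝ) : 0 ≤ tailProb X t :=
  expect_nonneg fun ω _ ↦ by positivity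

lemma antitone_ite_le_one_zero (x : ℝ) : Antitone fun t : ℝ ↦ if t ≤ x then (1 : ℝ) else 0 := by
  intro s t hst
  dsimp only
  split_ifs with ht hs hs
  exacts [le_rfl, absurd (hst.trans ht) hs, zero_le_one, le_rfl]

lemma antitone_tailProb (X : Ω → ℝ) : Antitone (tailProb X) :=
  fun _ _ hst ↦ expect_le_expect fun ω _ ↦ antitone_ite_le_one_zero (X ω) hst

lemma mul_tailProb_le_expect_min {X : Ω → ℝ} (hX : ∀ ω, 0 ≤ X ω) {t : ℝ} (ht : 0 ≤ t) :
    t * tailProb X t ≤ 𝔼 ω, min t (X ω) := by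
  rw [tailProb, mul_expect]
  refine expect_le_expect fun ω _ ↦ ?_
  split_ifs with h
  · simp [h]
  · simpa using ⟨ht, hX ω⟩

lemma tailProb_le_pow {k : ℕ} {X : Ω → ℝ} {Y : (Fin k → Ω) → ℝ}
    (hYX : ∀ h l, Y h ≤ X (h l)) (t : ℝ) : tailProb Y t ≤ tailProb X t ^ k := by
  rw [tailProb, tailProb, expect_pow, Fintype.piFinset_univ]
  refine expect_le_expect fun h _ ↦ ?_
  split_ifs with ht
  · simp [fun l ↦ ht.trans (hYX h l)]
  · exact prod_nonneg fun l _ ↦ by positivity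

lemma le_add_integral_ite_le {a s x : ℝ} (has : a ≤ s) (hx : x ≤ s) :
    x ≤ a + ∫ t in a..s, if t ≤ x then (1 : ℝ) else 0 := by
  rcases le_total x a with hxa | hax
  · have : 0 ≤ ∫ t in a..s, if t ≤ x then (1 : ℝ) else 0 :=
      intervalIntegral.integral_nonneg has fun t _ ↦ by positivity
    linarith
  · have := intervalIntegral.integral_indicator (μ := MeasureTheory.volume)
      (f := fun _ ↦ (1 : ℝ)) (Set.mem_Icc.mpr ⟨hax, hx⟩)
    simp only [Set.indicator_apply, Set.mem_ofPred_eq, intervalIntegral.integral_const,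
      smul_eq_mul, mul_one] at this
    linarith

lemma expect_le_add_integral_tailProb [Nonempty Ω] {X : Ω → ℝ} {a s : ℝ} (has : a ≤ s)
    (hX : ∀ ω, X ω ≤ s) : 𝔼 ω, X ω ≤ a + ∫ t in a..s, tailProb X t := by
  have swap : ∫ t in a..s, tailProb X t = 𝔼 ω, ∫ t in a..s, if t ≤ X ω then (1 : ℝ) else 0 := by
    simp only [tailProb, Fintype.expect_eq_sum_div_card, intervalIntegral.integral_div]
    rw [intervalIntegral.integral_finsetSum fun ω _ ↦
      (antitone_ite_le_one_zero (X ω)).intervalIntegrable]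
  calc 𝔼 ω, X ω ≤ 𝔼 ω, (a + ∫ t in a..s, if t ≤ X ω then (1 : ℝ) else 0) :=
        expect_le_expect fun ω _ ↦ le_add_integral_ite_le has (hX ω)
    _ = a + ∫ t in a..s, tailProb X t := by
        rw [expect_add_distrib, Fintype.expect_const, swap]

lemma expect_le_add_mul_log_of_tailProb_le [Nonempty Ω] {X : Ω → ℝ} {a s c : ℝ} (ha : 0 < a)
    (has : a ≤ s) (hX : ∀ ω, X ω ≤ s)
    (htail : ∀ t ∈ Set.Icc a s, tailProb X t ≤ c / t) :
    𝔼 ω, X ω ≤ a + c * Real.log (s / a) := by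
  have hinv : IntervalIntegrable (fun t : ℝ ↦ c / t) MeasureTheory.volume a s := by
    refine ContinuousOn.intervalIntegrable fun t ht ↦ ContinuousAt.continuousWithinAt ?_
    rw [Set.uIcc_of_le has] at ht
    exact continuousAt_const.div continuousAt_id (ha.trans_le ht.1).ne'
  calc 𝔼 ω, X ω ≤ a + ∫ t in a..s, tailProb X t := expect_le_add_integral_tailProb has hX
    _ ≤ a + ∫ t in a..s, c / t := by
        gcongr
        exact intervalIntegral.integral_mono_on has (antitone_tailProb X).intervalIntegrable
          hinv htail
    _ = a + c * Real.log (s / a) := by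
        simp_rw [div_eq_mul_one_div c]
        rw [intervalIntegral.integral_const_mul,
          integral_one_div_of_pos ha (ha.trans_le has)]

end UniformProbability

section Hashing

lemma expect_ite_apply_eq_apply {ι β : Type*} [Fintype ι] [DecidableEq ι] [Fintype β]
    [DecidableEq β] [Nonempty β] {i j : ι} (hij : i ≠ j) :
    𝔼 g : ι → β, (if g j = g i then (1 : ℝ) else 0) = 1 / Fintype.card β := by
  calc 𝔼 g : ι → β, (if g j = g i then (1 : ℝ) else 0)
      = 𝔼 p : β × ({x // x ≠ j} → β), if p.1 = p.2 ⟨i, hij⟩ then (1 : ℝ) else 0 :=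
        Fintype.expect_equiv (Equiv.funSplitAt j β) _ _ fun g ↦ rfl
    _ = 𝔼 g' : {x // x ≠ j} → β, 𝔼 b, if b = g' ⟨i, hij⟩ then (1 : ℝ) else 0 := by
        rw [← univ_product_univ, expect_product, expect_comm]
    _ = 1 / Fintype.card β := by
        simp [NNRat.smul_def]

lemma min_sum_le_sum_min {ι : Type*} (s : Finset ι) {x : ι → ℝ} (hx : ∀ j ∈ s, 0 ≤ x j) {t : ℝ}
    (ht : 0 ≤ t) : min t (∑ j ∈ s, x j) ≤ ∑ j ∈ s, min t (x j) := by
  refine le_sum_of_subadditive_on_pred (min t) (0 ≤ ·) (min_le_right t 0) ?_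
    (fun _ _ ↦ add_nonneg) x hx
  intro x y hx hy
  rcases le_total t x with h | h <;> rcases le_total t y with h' | h' <;>
    simp [h, h', ht, hx, hy]

variable {n B k : ℕ}

/-- The overestimate of the frequency of item `i` in a single row of the sketch with hash
function `g`: the total frequency of the other items that `g` maps to the bucket of `i`. -/
noncomputable def rowErr (f : Fin n → ℝ) (i : Fin n) (g : Fin n → Fin B) : ℝ :=
  ∑ j ∈ univ.erase i, if g j = g i then f j else 0

lemma cmEst_sub_le_rowErr (f : Fin n → ℝ) (i : Fin n) (h : Fin k → Fin n → Fin B) (l : Fin k) :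
    cmEst f h i - f i ≤ rowErr f i (h l) := by
  have row : ∑ j, (if h l j = h l i then f j else 0) = f i + rowErr f i (h l) := by
    rw [rowErr, ← add_sum_erase _ _ (mem_univ i), if_pos rfl]
  rw [sub_le_iff_le_add', ← row]
  exact ciInf_le (Set.finite_range _).bddBelow l

variable {f : Fin n → ℝ}

lemma rowErr_nonneg (hf : ∀ j, 0 ≤ f j) (i : Fin n) (g : Fin n → Fin B) : 0 ≤ rowErr f i g :=
  sum_nonneg fun j _ ↦ ite_nonneg (hf j) le_rfl

lemma rowErr_le_sum (hf : ∀ j, 0 ≤ f j) (i : Fin n) (g : Fin n → Fin B) :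
    rowErr f i g ≤ ∑ j, f j :=
  calc rowErr f i g ≤ ∑ j ∈ univ.erase i, f j :=
        sum_le_sum fun j _ ↦ ite_le_sup (f j) 0 _ |>.trans (max_le le_rfl (hf j))
    _ ≤ ∑ j, f j := sum_le_sum_of_subset_of_nonneg (erase_subset _ _) fun j _ _ ↦ hf j

lemma tailProb_rowErr_le [NeZero B] (hf : ∀ j, 0 ≤ f j) (i : Fin n) {t : ℝ} (ht : 0 < t) :
    tailProb (rowErr (B := B) f i) t ≤ (∑ j, min t (f j)) / (t * B) := by
  have hmin (j : Fin n) : 0 ≤ min t (f j) := le_min ht.le (hf j)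
  have trunc (g : Fin n → Fin B) : min t (rowErr f i g) ≤
      ∑ j ∈ univ.erase i, min t (f j) * if g j = g i then 1 else 0 := by
    refine (min_sum_le_sum_min _ (fun j _ ↦ ite_nonneg (hf j) le_rfl) ht.le).trans_eq ?_
    refine sum_congr rfl fun j _ ↦ ?_
    split_ifs <;> simp [ht.le]
  have markov : t * tailProb (rowErr (B := B) f i) t ≤ (∑ j, min t (f j)) / B :=
    calc t * tailProb (rowErr (B := B) f i) t ≤ 𝔼 g : Fin n → Fin B, min t (rowErr f i g) :=
          mul_tailProb_le_expect_min (rowErr_nonneg hf i) ht.le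
      _ ≤ 𝔼 g : Fin n → Fin B, ∑ j ∈ univ.erase i, min t (f j) * if g j = g i then 1 else 0 :=
          expect_le_expect fun g _ ↦ trunc g
      _ = ∑ j ∈ univ.erase i, min t (f j) * (1 / B) := by
          rw [expect_sum_comm]
          refine sum_congr rfl fun j hj ↦ ?_
          rw [← mul_expect, expect_ite_apply_eq_apply (ne_of_mem_erase hj).symm,
            Fintype.card_fin]
      _ ≤ ∑ j, min t (f j) * (1 / B) :=
          sum_le_sum_of_subset_of_nonneg (erase_subset _ _) fun j _ _ ↦
            mul_nonneg (hmin j) (by positivity)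
      _ = (∑ j, min t (f j)) / B := by rw [← sum_mul, mul_one_div]
  rwa [mul_comm t, ← div_div, le_div_iff₀' ht]

lemma tailProb_cmEst_sub_le [NeZero B] (hf : ∀ j, 0 ≤ f j) (i : Fin n) {t : ℝ} (ht : 0 < t) :
    tailProb (fun h : Fin k → Fin n → Fin B ↦ cmEst f h i - f i) t ≤
      ((∑ j, min t (f j)) / (t * B)) ^ k :=
  (tailProb_le_pow (fun h l ↦ cmEst_sub_le_rowErr f i h l) t).trans
    (pow_le_pow_left₀ (tailProb_nonneg _ t) (tailProb_rowErr_le hf i ht) k)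

end Hashing

section PowerSums

variable {α : ℝ}

lemma antitone_max_rpow_neg (hα : 0 ≤ α) {m : ℝ} (hm : 0 < m) :
    Antitone fun x : ℝ ↦ max x m ^ (-α) := fun x y hxy ↦
  Real.rpow_le_rpow_of_nonpos (lt_max_of_lt_right hm) (max_le_max_right m hxy) (by linarith)

lemma integral_max_rpow_neg_le (hα : 1 < α) {m : ℝ} (hm : 0 < m) {b : ℝ} (hb : 0 ≤ b) :
    ∫ x in (0 : ℝ)..b, max x m ^ (-α) ≤ α / (α - 1) * m ^ (1 - α) := by
  have hint (a b : ℝ) :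
      IntervalIntegrable (fun x : ℝ ↦ max x m ^ (-α)) MeasureTheory.volume a b :=
    (antitone_max_rpow_neg (by linarith) hm).intervalIntegrable
  have head : ∫ x in (0 : ℝ)..m, max x m ^ (-α) = m ^ (1 - α) := by
    rw [intervalIntegral.integral_congr (g := fun _ ↦ m ^ (-α)) fun x hx ↦ ?_]
    · rw [intervalIntegral.integral_const, smul_eq_mul, sub_zero, sub_eq_add_neg,
        Real.rpow_add hm, Real.rpow_one]
    · rw [Set.uIcc_of_le hm.le] at hx
      simp only [max_eq_right hx.2]
  have tail {c : ℝ} (hc : m ≤ c) :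
      ∫ x in m..c, max x m ^ (-α) ≤ m ^ (1 - α) / (α - 1) := by
    rw [intervalIntegral.integral_congr (g := fun x ↦ x ^ (-α)) fun x hx ↦ ?_]
    · rw [integral_rpow (Or.inr ⟨by linarith, Set.notMem_uIcc_of_lt hm (hm.trans_le hc)⟩),
        ← neg_div_neg_eq, show -(-α + 1) = α - 1 by ring, show -α + 1 = 1 - α by ring]
      have : 0 ≤ c ^ (1 - α) := Real.rpow_nonneg (hm.le.trans hc) _
      gcongr ?_ / _
      linarith
    · rw [Set.uIcc_of_le hc] at hx
      simp only [max_eq_left hx.1]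
  calc ∫ x in (0 : ℝ)..b, max x m ^ (-α) ≤ ∫ x in (0 : ℝ)..max b m, max x m ^ (-α) :=
        intervalIntegral.integral_mono_interval le_rfl hb (le_max_left b m)
          (Filter.Eventually.of_forall fun x ↦ by positivity) (hint _ _)
    _ = m ^ (1 - α) + ∫ x in m..max b m, max x m ^ (-α) := by
        rw [← head, intervalIntegral.integral_add_adjacent_intervals (hint _ _) (hint _ _)]
    _ ≤ m ^ (1 - α) + m ^ (1 - α) / (α - 1) := by gcongr; exact tail (le_max_right b m)
    _ = α / (α - 1) * m ^ (1 - α) := by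
        have : α - 1 ≠ 0 := by linarith
        field_simp
        ring

lemma sum_range_max_rpow_neg_le (hα : 1 < α) {m : ℝ} (hm : 0 < m) (n : ℕ) :
    ∑ j ∈ range n, max ((j : ℝ) + 1) m ^ (-α) ≤ α / (α - 1) * m ^ (1 - α) := by
  refine le_trans ?_ (integral_max_rpow_neg_le hα hm n.cast_nonneg)
  simpa using ((antitone_max_rpow_neg (by linarith) hm).antitoneOn _).sum_le_integral
    (x₀ := 0) (a := n)

variable {n : ℕ}

lemma zipfGen_nonneg (α : ℝ) (j : Fin n) : 0 ≤ zipfGen α j := by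
  unfold zipfGen
  positivity

lemma zipfGen_le_one (hα : 0 ≤ α) (j : Fin n) : zipfGen α j ≤ 1 :=
  Real.rpow_le_one_of_one_le_of_nonpos (by simp) (by linarith)

lemma sum_min_zipfGen_le (hα : 1 < α) (n : ℕ) {t : ℝ} (ht : 0 < t) :
    ∑ j : Fin n, min t (zipfGen α j) ≤ α / (α - 1) * t ^ (1 - 1 / α) := by
  have hα0 : α ≠ 0 := by linarith
  set m := t ^ (-1 / α) with hm
  have hm0 : 0 < m := Real.rpow_pos_of_pos ht _
  have hmα : m ^ (-α) = t := by
    rw [hm, ← Real.rpow_mul ht.le, div_mul_eq_mul_div, neg_mul_neg, one_mul, div_self hα0,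
      Real.rpow_one]
  have hm1 : m ^ (1 - α) = t ^ (1 - 1 / α) := by
    rw [hm, ← Real.rpow_mul ht.le]
    congr 1
    field_simp
    ring
  have hmin (j : ℕ) : min t (((j : ℝ) + 1) ^ (-α)) = max ((j : ℝ) + 1) m ^ (-α) := by
    rw [min_comm, ← hmα]
    exact ((Real.antitoneOn_rpow_Ioi_of_exponent_nonpos (by linarith)).map_max
      (Set.mem_Ioi.mpr (by positivity)) hm0).symm
  simp only [zipfGen, hmin]
  rw [Fin.sum_univ_eq_sum_range fun j ↦ max ((j : ℝ) + 1) m ^ (-α), ← hm1]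
  exact sum_range_max_rpow_neg_le hα hm0 n

lemma sum_zipfGen_le (hα : 1 < α) (n : ℕ) : ∑ j : Fin n, zipfGen α j ≤ α / (α - 1) := by
  simpa [zipfGen_le_one (zero_le_one.trans hα.le)] using sum_min_zipfGen_le hα n one_pos

end PowerSums

lemma one_le_div_sub_one {α : ℝ} (hα : 1 < α) : 1 ≤ α / (α - 1) := by
  rw [one_le_div] <;> linarith

lemma rpow_neg_mul_rpow_le {α p b s t : ℝ} (hα : 0 < α) (hp : 0 ≤ p) (hb : 0 < b) (hs : 1 ≤ s)
    (hbt : b ^ (-α) ≤ t) (hts : t ≤ s) :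
    b ^ (-p) * t ^ (1 - p / α) ≤ s * (b ^ (-p) + b ^ (-α)) := by
  have hp0 : 0 < b ^ (-p) := Real.rpow_pos_of_pos hb _
  have hα0 : 0 < b ^ (-α) := Real.rpow_pos_of_pos hb _
  rcases le_total (p / α) 1 with h | h
  · have small : t ^ (1 - p / α) ≤ s :=
      calc t ^ (1 - p / α) ≤ s ^ (1 - p / α) :=
            Real.rpow_le_rpow (hα0.le.trans hbt) hts (by linarith)
        _ ≤ s := Real.rpow_le_self_of_one_le hs (by linarith [div_nonneg hp hα.le])
    nlinarith
  · have large : b ^ (-p) * t ^ (1 - p / α) ≤ b ^ (-α) :=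
      calc b ^ (-p) * t ^ (1 - p / α) ≤ b ^ (-p) * (b ^ (-α)) ^ (1 - p / α) := by
            gcongr ?_ * ?_
            exact Real.rpow_le_rpow_of_nonpos hα0 hbt (by linarith)
        _ = b ^ (-α) := by
            rw [← Real.rpow_mul hb.le, ← Real.rpow_add hb]
            congr 1
            field_simp
            ring
    nlinarith

lemma tailProb_cmEst_zipfGen_sub_le {α : ℝ} (hα : 1 < α) {n B k : ℕ} [NeZero B] (i : Fin n)
    {t : ℝ} (hBt : (B : ℝ) ^ (-α) ≤ t) (ht : t ≤ α / (α - 1)) :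
    tailProb (fun h : Fin k → Fin n → Fin B ↦ cmEst (zipfGen α) h i - zipfGen α i) t ≤
      (α / (α - 1)) ^ (k + 1) * ((B : ℝ) ^ (-(k : ℝ)) + (B : ℝ) ^ (-α)) / t := by
  have hB : (0 : ℝ) < B := mod_cast NeZero.pos B
  have ht0 : 0 < t := (Real.rpow_pos_of_pos hB _).trans_le hBt
  have hD := one_le_div_sub_one hα
  set D := α / (α - 1)
  have hpow : (D * t ^ (1 - 1 / α) / (t * B)) ^ k =
      D ^ k * ((B : ℝ) ^ (-(k : ℝ)) * t ^ (1 - k / α)) / t := by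
    have ht1 : t ^ (1 - 1 / α) / t = t ^ (-1 / α) := by
      rw [← Real.rpow_sub_one ht0.ne']
      congr 1
      ring
    have htk : t ^ (1 - k / α) / t = (t ^ (-1 / α)) ^ k := by
      rw [← Real.rpow_sub_one ht0.ne', ← Real.rpow_mul_natCast ht0.le]
      congr 1
      ring
    rw [mul_div_assoc, ← div_div, ht1, mul_div_assoc, mul_div_assoc, htk, mul_pow, div_pow,
      Real.rpow_neg hB.le, Real.rpow_natCast]
    ring
  calc tailProb (fun h : Fin k → Fin n → Fin B ↦ cmEst (zipfGen α) h i - zipfGen α i) t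
      ≤ ((∑ j : Fin n, min t (zipfGen α j)) / (t * B)) ^ k :=
        tailProb_cmEst_sub_le (zipfGen_nonneg α) i ht0
    _ ≤ (D * t ^ (1 - 1 / α) / (t * B)) ^ k := by
        have := sum_nonneg fun (j : Fin n) (_ : j ∈ univ) ↦ le_min ht0.le (zipfGen_nonneg α j)
        gcongr
        exact sum_min_zipfGen_le hα n ht0
    _ = D ^ k * ((B : ℝ) ^ (-(k : ℝ)) * t ^ (1 - k / α)) / t := hpow
    _ ≤ D ^ k * (D * ((B : ℝ) ^ (-(k : ℝ)) + (B : ℝ) ^ (-α))) / t := by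
        gcongr ?_ * ?_ / _
        exact rpow_neg_mul_rpow_le (by linarith) k.cast_nonneg hB hD hBt ht
    _ = D ^ (k + 1) * ((B : ℝ) ^ (-(k : ℝ)) + (B : ℝ) ^ (-α)) / t := by ring

lemma expUnif_cmEst_zipfGen_sub_le {α : ℝ} (hα : 1 < α) {n B k : ℕ} [NeZero B] [NeZero k]
    (i : Fin n) :
    expUnif (fun h : Fin k → Fin n → Fin B ↦ cmEst (zipfGen α) h i - zipfGen α i) ≤
      (1 + (α / (α - 1)) ^ (k + 1) * (Real.log (α / (α - 1)) + α * Real.log B)) *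
        ((B : ℝ) ^ (-(k : ℝ)) + (B : ℝ) ^ (-α)) := by
  have hB : (1 : ℝ) ≤ B := mod_cast NeZero.one_le
  have hB0 : (0 : ℝ) < B := by linarith
  have ha0 : 0 < (B : ℝ) ^ (-α) := Real.rpow_pos_of_pos hB0 _
  have ha1 : (B : ℝ) ^ (-α) ≤ 1 := Real.rpow_le_one_of_one_le_of_nonpos hB (by linarith)
  have hD := one_le_div_sub_one hα
  set D := α / (α - 1)
  set W := (B : ℝ) ^ (-(k : ℝ)) + (B : ℝ) ^ (-α)
  have haW : (B : ℝ) ^ (-α) ≤ W := le_add_of_nonneg_left (by positivity)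
  have hlog : Real.log (D / (B : ℝ) ^ (-α)) = Real.log D + α * Real.log B := by
    rw [Real.log_div (by linarith) ha0.ne', Real.log_rpow hB0]
    ring
  have hle (h : Fin k → Fin n → Fin B) : cmEst (zipfGen α) h i - zipfGen α i ≤ D :=
    (cmEst_sub_le_rowErr _ i h 0).trans <|
      (rowErr_le_sum (zipfGen_nonneg α) i _).trans (sum_zipfGen_le hα n)
  rw [expUnif_eq_expect]
  calc _ ≤ (B : ℝ) ^ (-α) + D ^ (k + 1) * W * Real.log (D / (B : ℝ) ^ (-α)) :=
        expect_le_add_mul_log_of_tailProb_le ha0 (ha1.trans hD) hle fun t ht ↦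
          tailProb_cmEst_zipfGen_sub_le hα i ht.1 ht.2
    _ ≤ W + D ^ (k + 1) * W * (Real.log D + α * Real.log B) := by rw [hlog]; gcongr
    _ = (1 + D ^ (k + 1) * (Real.log D + α * Real.log B)) * W := by ring

lemma one_add_pow_mul_le_pow_mul {d c q L α : ℝ} (hd : 1 ≤ d) (hc : 0 ≤ c) (hα : 1 ≤ α)
    (hq : 0 < q) (hqL : q ≤ L) {k : ℕ} (hk : k ≠ 0) :
    1 + d ^ (k + 1) * (c + α * L) ≤ (d ^ 2 * ((1 + c) / q + α)) ^ k * L := by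
  have hL : 1 ≤ L / q := (one_le_div hq).mpr hqL
  have hE : 1 ≤ (1 + c) / q + α := le_add_of_nonneg_of_le (by positivity) hα
  calc 1 + d ^ (k + 1) * (c + α * L) ≤ d ^ (k + 1) * (1 + c + α * L) := by
        linarith [one_le_pow₀ hd (n := k + 1)]
    _ ≤ d ^ (k + 1) * ((1 + c) * (L / q) + α * L) := by
        gcongr
        exact le_mul_of_one_le_right (by positivity) hL
    _ = d ^ (k + 1) * ((1 + c) / q + α) * L := by ring
    _ ≤ d ^ (2 * k) * ((1 + c) / q + α) ^ k * L := by
        gcongr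
        · exact hq.le.trans hqL
        · lia
        · exact le_self_pow₀ hE hk
    _ = (d ^ 2 * ((1 + c) / q + α)) ^ k * L := by rw [mul_pow, pow_mul]

lemma pow_le_rpow_div {q L α : ℝ} (hq : 0 < q) (hq1 : q ≤ 1) (hqL : q ≤ L) (hα : 1 ≤ α) (k : ℕ) :
    q ^ k ≤ L ^ ((k : ℝ) / α) :=
  calc q ^ k = q ^ (k : ℝ) := (Real.rpow_natCast q k).symm
    _ ≤ q ^ ((k : ℝ) / α) :=
        Real.rpow_le_rpow_of_exponent_ge hq hq1 (div_le_self k.cast_nonneg hα)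
    _ ≤ L ^ ((k : ℝ) / α) := Real.rpow_le_rpow hq.le hqL (by positivity)

lemma pow_mul_log_le_div_log_two_pow_mul {C α : ℝ} (hC : 0 ≤ C) (hα : 1 ≤ α) {B : ℕ} (hB : 2 ≤ B)
    (k : ℕ) : C ^ k * Real.log B ≤ (C / Real.log 2) ^ k * Real.log B ^ ((k : ℝ) / α + 1) := by
  have hlog2 : 0 < Real.log 2 := Real.log_pos one_lt_two
  have hlog : Real.log 2 ≤ Real.log B := Real.log_le_log two_pos (mod_cast hB)
  have hlogB : 0 < Real.log B := hlog2.trans_le hlog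
  calc C ^ k * Real.log B = (C / Real.log 2) ^ k * (Real.log 2 ^ k * Real.log B) := by
        rw [div_pow]
        field_simp
    _ ≤ (C / Real.log 2) ^ k * (Real.log B ^ ((k : ℝ) / α) * Real.log B) := by
        gcongr
        exact pow_le_rpow_div hlog2 (by linarith [Real.log_two_lt_d9]) hlog hα k
    _ = (C / Real.log 2) ^ k * Real.log B ^ ((k : ℝ) / α + 1) := by
        rw [Real.rpow_add_one hlogB.ne']

theorem countMin_genZipf_large_alpha_upper_general :
    ∀ α : ℝ, 1 < α →
      ∃ C : ℝ, 0 < C ∧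
        ∀ n B k : ℕ, 1 ≤ k → 2 ≤ B → ∀ i : Fin n,
          expUnif (fun h : Fin k → Fin n → Fin B ↦ cmEst (zipfGen α) h i - zipfGen α i) ≤
            C ^ k * Real.log B * ((B : ℝ) ^ (-(k : ℝ)) + (B : ℝ) ^ (-α)) := by
  intro α hα
  have hD := one_le_div_sub_one hα
  have hlogD := Real.log_nonneg hD
  have hlog2 : 0 < Real.log 2 := Real.log_pos one_lt_two
  refine ⟨(α / (α - 1)) ^ 2 * ((1 + Real.log (α / (α - 1))) / Real.log 2 + α), by positivity,
    fun n B k hk hB i ↦ ?_⟩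
  have : NeZero B := ⟨by lia⟩
  have : NeZero k := ⟨by lia⟩
  refine (expUnif_cmEst_zipfGen_sub_le hα i).trans ?_
  gcongr
  exact one_add_pow_mul_le_pow_mul hD hlogD hα.le hlog2
    (Real.log_le_log two_pos (mod_cast hB)) (NeZero.ne k)

/-- for Zipfian input with exponent `α > 1`, the expected
Count-Min error with `k ≥ 2` hash functions is at most
`C^k·(log B)^{k/α+1}·(B^{-k} + B^{-α})`. -/
theorem countMin_genZipf_large_alpha_upper :
    ∀ α : ℝ, 1 < α →
      ∃ C : ℝ, 0 < C ∧
        ∀ n B k : ℕ, 2 ≤ k → 2 ≤ B → k * B ≤ n → ∀ i : Fin n,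
          expUnif (fun h : Fin k → Fin n → Fin B =>
              cmEst (zipfGen α) h i - zipfGen α i) ≤
            C ^ k * Real.log (B : ℝ) ^ ((k : ℝ) / α + 1) *
              ((B : ℝ) ^ (-(k : ℝ)) + (B : ℝ) ^ (-α)) := by
  intro α hα
  obtain ⟨C, hC, hbound⟩ := countMin_genZipf_large_alpha_upper_general α hα
  exact ⟨C / Real.log 2, div_pos hC (Real.log_pos one_lt_two), fun n B k hk hB _ i ↦
    (hbound n B k (by lia) hB i).trans <| mul_le_mul_of_nonneg_right
      (pow_mul_log_le_div_log_two_pow_mul hC.le hα.le hB k) (by positivity)⟩
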